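/- arXiv:2502.14056 — 2 statements merged into one kernel-verified Lean document; each statement's English description precedes it below -/
import Mathlib

section
/- (Hunter's inequality) For all integers k ≥ 0, d ≥ 1 and every (x₁,…,x_d) ∈ ℝ^d, the complete homogeneous symmetric polynomial of even degree satisfies h_{2k}(x₁,…,x_d) ≥ (x₁² + … + x_d²)^k / (2^k · k!). -/
noncomputable section

/-- The content of the cell in row `i` and column `j` (0-indexed) is `j - i`. -/
def content (c : ℕ × ℕ) : ℤ := (c.2 : ℤ) - (c.1 : ℤ)

open scoped Classical in
/-- The complete homogeneous symmetric polynomial `h_r(x₁, …, x_d)` as a function of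
`x : Fin d → ℝ`: the sum of `x_{i₁} ⋯ x_{i_r}` over all `1 ≤ i₁ ≤ … ≤ i_r ≤ d`,
i.e. over all monotone maps `Fin r → Fin d`. -/
def hsym (d r : ℕ) (x : Fin d → ℝ) : ℝ :=
  ∑ f ∈ Finset.univ.filter (fun f : Fin r → Fin d => Monotone f), ∏ i, x (f i)

/-- `h_r(λ)`: the evaluation of the complete homogeneous symmetric polynomial of degree `r`
at the multiset of contents of the Young diagram `λ` (independent of the enumeration of
the cells, `h_r` being symmetric). -/
def hYoung (r : ℕ) (lam : YoungDiagram) : ℝ :=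
  hsym lam.cells.card r (fun i => (content (lam.cells.equivFin.symm i) : ℝ))

/-!
Write `h r s` for the complete homogeneous symmetric polynomial of a multiset `s`, the coefficient
of `X ^ r` in `∏ a ∈ s, 1 / (1 - a X)`. The proof (Hunter's) is by induction on `k`, and rests on
two identities:
`∂h_{r+1}(a, s) / ∂a = h_r(a, a, s)` and `h_{r+1}(a, s) - h_{r+1}(b, s) = (a - b) h_r(a, b, s)`.

By homogeneity it is enough to bound `h_{2k+2}` at a point `x` of the unit sphere where it is
minimal, with value `c`. The Lagrange multiplier equations there read
`h_{2k+1}(x_i, x) = 2 (k + 1) c x_i`, and subtracting those of two distinct coordinates leaves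
`2 (k + 1) c = h_{2k}(x_i, x_j, x)`, which the induction hypothesis bounds from below.

Two distinct coordinates can always be found: adjoining zeros to `x` changes nothing, so there are
at least two coordinates, and if all of them are equal, then flipping the sign of one of them does
not increase `h_{2k+2}`, hence yields another minimum.
-/

open PowerSeries (C X coeff)

section Monotone

lemma monotone_cons_bot_iff {α : Type*} [Preorder α] [OrderBot α] {r : ℕ} {g : Fin r → α} :
    Monotone (Fin.cons ⊥ g : Fin (r + 1) → α) ↔ Monotone g := by
  refine ⟨fun h i j hij => by simpa using h (Fin.succ_le_succ_iff.mpr hij), fun h i j hij => ?_⟩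
  cases i using Fin.cases with
  | zero => simp
  | succ i =>
    cases j using Fin.cases with
    | zero => simp at hij
    | succ j => simpa using h (Fin.succ_le_succ_iff.mp hij)

variable {M : Type*} [AddCommMonoid M] {r d : ℕ}

open scoped Classical in
lemma sum_monotone_apply_zero_eq_zero (F : (Fin (r + 1) → Fin (d + 1)) → M) :
    ∑ f with Monotone f ∧ f 0 = 0, F f = ∑ g with Monotone g, F (Fin.cons 0 g) := by
  refine Finset.sum_nbij' Fin.tail (Fin.cons 0 ·) ?_ ?_ ?_ ?_ ?_
  · simp only [Finset.mem_filter_univ]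
    exact fun f hf => hf.1.comp Fin.strictMono_succ.monotone
  · simp only [Finset.mem_filter_univ]
    exact fun g hg => ⟨monotone_cons_bot_iff.mpr hg, rfl⟩
  · simp only [Finset.mem_filter_univ]
    exact fun f hf => by rw [← hf.2, Fin.cons_self_tail]
  · exact fun g _ => Fin.tail_cons (α := fun _ => Fin (d + 1)) 0 g
  · simp only [Finset.mem_filter_univ]
    exact fun f hf => by rw [← hf.2, Fin.cons_self_tail]

open scoped Classical in
lemma sum_monotone_apply_zero_ne_zero (F : (Fin (r + 1) → Fin (d + 1)) → M) :
    ∑ f with Monotone f ∧ f 0 ≠ 0, F f =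
      ∑ g : Fin (r + 1) → Fin d with Monotone g, F (Fin.succ ∘ g) := by
  symm
  refine Finset.sum_nbij (Fin.succ ∘ ·) ?_ ?_ ?_ fun _ _ => rfl
  · simp only [Finset.mem_filter_univ]
    exact fun g hg => ⟨Fin.strictMono_succ.monotone.comp hg, Fin.succ_ne_zero _⟩
  · exact ((Fin.succ_injective d).comp_left).injOn
  · intro f hf
    obtain ⟨hmono, h0⟩ := (Finset.mem_filter_univ f).mp hf
    have hne (i : Fin (r + 1)) : f i ≠ 0 :=
      ((Fin.pos_of_ne_zero h0).trans_le (hmono (Fin.zero_le i))).ne'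
    exact ⟨fun i => (f i).pred (hne i),
      by simpa using Fin.monotone_pred_comp hne hmono,
      funext fun i => Fin.succ_pred _ (hne i)⟩

end Monotone

section hsym

variable (d r : ℕ)

lemma hsym_zero_right (x : Fin d → ℝ) : hsym d 0 x = 1 := by
  simp [hsym, Subsingleton.monotone]

lemma hsym_zero_left_succ (x : Fin 0 → ℝ) : hsym 0 (r + 1) x = 0 := by
  simp [hsym]

lemma hsym_succ_succ (x : Fin (d + 1) → ℝ) :
    hsym (d + 1) (r + 1) x = hsym d (r + 1) (Fin.tail x) + x 0 * hsym (d + 1) r x := by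
  classical
  rw [hsym, ← Finset.sum_filter_not_add_sum_filter _ (fun f => f 0 = 0), Finset.filter_filter,
    Finset.filter_filter]
  congr 1
  · exact sum_monotone_apply_zero_ne_zero _
  · rw [sum_monotone_apply_zero_eq_zero, hsym, Finset.mul_sum]
    simp [Fin.prod_univ_succ]

end hsym

section GeomSeries

/-- The geometric series `1 / (1 - a X) = ∑ aⁿ Xⁿ`, the factor contributed by the variable `a` to
the generating function of the complete homogeneous symmetric polynomials. -/
def geomSeries {R : Type*} [Semiring R] (a : R) : PowerSeries R :=
  PowerSeries.mk (a ^ ·)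

@[simp]
lemma coeff_geomSeries {R : Type*} [Semiring R] (n : ℕ) (a : R) :
    coeff n (geomSeries a) = a ^ n :=
  PowerSeries.coeff_mk n _

lemma geomSeries_eq_one_add {R : Type*} [CommSemiring R] (a : R) :
    geomSeries a = 1 + C a * geomSeries a * X := by
  ext n
  cases n with
  | zero => simp
  | succ n =>
    rw [map_add, PowerSeries.coeff_succ_mul_X, PowerSeries.coeff_C_mul]
    simp [PowerSeries.coeff_one, pow_succ']

lemma geomSeries_sub_geomSeries {R : Type*} [CommRing R] (a b : R) :
    geomSeries a - geomSeries b = C (a - b) * (geomSeries a * geomSeries b) * X := by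
  rw [map_sub]
  linear_combination
    geomSeries b * geomSeries_eq_one_add a - geomSeries a * geomSeries_eq_one_add b

lemma rescale_geomSeries {R : Type*} [CommSemiring R] (c a : R) :
    PowerSeries.rescale c (geomSeries a) = geomSeries (c * a) := by
  ext n
  simp [PowerSeries.coeff_rescale, mul_pow]

end GeomSeries

/-- The complete homogeneous symmetric polynomial of degree `r` evaluated at the elements of a
multiset, defined through its generating function. Multisets make it easy to repeat variables, as
its derivatives require. -/
def multisetHsym {R : Type*} [CommSemiring R] (r : ℕ) (s : Multiset R) : R :=
  coeff r (s.map geomSeries).prod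

section CommSemiring

variable {R : Type*} [CommSemiring R]

lemma multisetHsym_cons (r : ℕ) (a : R) (s : Multiset R) :
    multisetHsym r (a ::ₘ s) =
      ∑ p ∈ Finset.HasAntidiagonal.antidiagonal r, a ^ p.1 * multisetHsym p.2 s := by
  simp [multisetHsym, PowerSeries.coeff_mul]

lemma multisetHsym_cons_succ (r : ℕ) (a : R) (s : Multiset R) :
    multisetHsym (r + 1) (a ::ₘ s) = multisetHsym (r + 1) s + a * multisetHsym r (a ::ₘ s) := by
  simp only [multisetHsym, Multiset.map_cons, Multiset.prod_cons]
  rw [← PowerSeries.coeff_C_mul, ← PowerSeries.coeff_succ_mul_X r, ← map_add]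
  congr 1
  nth_rw 1 [geomSeries_eq_one_add]
  ring

lemma multisetHsym_zero_left (s : Multiset R) : multisetHsym 0 s = 1 := by
  induction s using Multiset.induction with
  | empty => simp [multisetHsym]
  | cons a s ih => simp [multisetHsym_cons, ih]

lemma multisetHsym_succ_zero (r : ℕ) : multisetHsym (r + 1) (0 : Multiset R) = 0 := by
  simp [multisetHsym, PowerSeries.coeff_one]

lemma multisetHsym_zero_cons (r : ℕ) (s : Multiset R) :
    multisetHsym r (0 ::ₘ s) = multisetHsym r s := by
  cases r with
  | zero => simp [multisetHsym_zero_left]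
  | succ r => simp [multisetHsym_cons_succ]

lemma multisetHsym_map_mul (r : ℕ) (c : R) (s : Multiset R) :
    multisetHsym r (s.map (c * ·)) = c ^ r * multisetHsym r s := by
  simp only [multisetHsym, ← PowerSeries.coeff_rescale, map_multiset_prod, Multiset.map_map,
    Function.comp_def, rescale_geomSeries]

lemma continuous_multisetHsym_map [TopologicalSpace R] [IsTopologicalSemiring R]
    {E ι : Type*} [TopologicalSpace E] {f : ι → E → R} (hf : ∀ i, Continuous (f i)) (r : ℕ)
    (s : Multiset ι) : Continuous fun x => multisetHsym r (s.map (f · x)) := by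
  induction s using Multiset.induction generalizing r with
  | empty => simpa using continuous_const
  | cons i s ih =>
    simp only [Multiset.map_cons, multisetHsym_cons]
    fun_prop

end CommSemiring

lemma multisetHsym_cons_sub_cons {R : Type*} [CommRing R] (r : ℕ) (a b : R) (s : Multiset R) :
    multisetHsym (r + 1) (a ::ₘ s) - multisetHsym (r + 1) (b ::ₘ s) =
      (a - b) * multisetHsym r (a ::ₘ b ::ₘ s) := by
  simp only [multisetHsym, Multiset.map_cons, Multiset.prod_cons]
  rw [← map_sub, ← sub_mul, geomSeries_sub_geomSeries, ← PowerSeries.coeff_C_mul,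
    ← PowerSeries.coeff_succ_mul_X r]
  congr 1
  ring

lemma abs_multisetHsym_le {R : Type*} [CommRing R] [LinearOrder R] [IsOrderedRing R]
    (r : ℕ) (s : Multiset R) : |multisetHsym r s| ≤ multisetHsym r (s.map abs) := by
  induction s using Multiset.induction generalizing r with
  | empty => cases r <;> simp [multisetHsym_zero_left, multisetHsym_succ_zero]
  | cons a s ih =>
    rw [Multiset.map_cons, multisetHsym_cons, multisetHsym_cons]
    refine (Finset.abs_sum_le_sum_abs _ _).trans (Finset.sum_le_sum fun p _ => ?_)
    rw [abs_mul, abs_pow]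
    gcongr
    exact ih p.2

lemma hasDerivAt_multisetHsym_cons {𝕜 : Type*} [NontriviallyNormedField 𝕜] (r : ℕ) (a : 𝕜)
    (s : Multiset 𝕜) :
    HasDerivAt (fun t => multisetHsym (r + 1) (t ::ₘ s)) (multisetHsym r (a ::ₘ a ::ₘ s)) a := by
  have hcont : Continuous fun t => multisetHsym r (t ::ₘ a ::ₘ s) := by
    simp only [multisetHsym_cons r _ (a ::ₘ s)]
    fun_prop
  rw [hasDerivAt_iff_tendsto_slope]
  refine ((hcont.tendsto a).mono_left nhdsWithin_le_nhds).congr' ?_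
  filter_upwards [self_mem_nhdsWithin] with t ht
  rw [slope_def_field, multisetHsym_cons_sub_cons, mul_div_cancel_left₀ _ (sub_ne_zero.mpr ht)]

lemma hsym_eq_multisetHsym (d r : ℕ) (x : Fin d → ℝ) :
    hsym d r x = multisetHsym r (Finset.univ.val.map x) := by
  induction d generalizing r with
  | zero =>
    cases r with
    | zero => rw [hsym_zero_right, multisetHsym_zero_left]
    | succ r => simpa [hsym_zero_left_succ] using (multisetHsym_succ_zero r).symm
  | succ d ihd =>
    have hcons : Finset.univ.val.map x = x 0 ::ₘ Finset.univ.val.map (Fin.tail x) := by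
      simp [List.ofFn_succ, Fin.tail_def]
    induction r with
    | zero => rw [hsym_zero_right, multisetHsym_zero_left]
    | succ r ihr => rw [hsym_succ_succ, ihd, ihr, hcons, ← multisetHsym_cons_succ]

lemma exists_norm_eq_one_forall_mul_norm_pow_le {E : Type*} [NormedAddCommGroup E]
    [NormedSpace ℝ E] [ProperSpace E] [Nontrivial E] {f : E → ℝ} {n : ℕ} (hf : Continuous f)
    (hhom : ∀ c : ℝ, 0 ≤ c → ∀ x : E, f (c • x) = c ^ n * f x) :
    ∃ x, ‖x‖ = 1 ∧ ∀ y, f x * ‖y‖ ^ n ≤ f y := by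
  obtain ⟨x, hx, hmin⟩ := (isCompact_sphere (0 : E) 1).exists_isMinOn
    (NormedSpace.sphere_nonempty.mpr zero_le_one) hf.continuousOn
  refine ⟨x, mem_sphere_zero_iff_norm.mp hx, fun y => ?_⟩
  obtain ⟨u, hu, hy⟩ : ∃ u ∈ Metric.sphere (0 : E) 1, ‖y‖ • u = y := by
    rcases eq_or_ne y 0 with rfl | hy
    · exact ⟨x, hx, by simp⟩
    · exact ⟨‖y‖⁻¹ • y, by simp [norm_smul, hy], by simp [smul_smul, hy]⟩
  calc f x * ‖y‖ ^ n
      ≤ f u * ‖y‖ ^ n := by gcongr; exact hmin hu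
    _ = f y := by rw [mul_comm, ← hhom _ (norm_nonneg y), hy]

/-- The sum of the squares of the elements of a multiset, the squared Euclidean norm of the vector
which it lists. -/
def sumSq {R : Type*} [Semiring R] (s : Multiset R) : R :=
  (s.map (· ^ 2)).sum

@[simp]
lemma sumSq_cons {R : Type*} [Semiring R] (a : R) (s : Multiset R) :
    sumSq (a ::ₘ s) = a ^ 2 + sumSq s := by
  simp [sumSq]

lemma sumSq_map_univ {R ι : Type*} [Semiring R] [Fintype ι] (x : ι → R) :
    sumSq (Finset.univ.val.map x) = ∑ i, x i ^ 2 := by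
  rw [sumSq, Multiset.map_map]
  rfl

lemma sumSq_nonneg {R : Type*} [Ring R] [LinearOrder R] [IsOrderedRing R] (s : Multiset R) :
    0 ≤ sumSq s :=
  Multiset.sum_nonneg (by simpa using fun a _ => sq_nonneg a)

/-- `s` lists the coordinates of a minimum of `h_{2k}` on the Euclidean unit sphere. Minimality is
stated in its homogeneous form, which compares `s` with all vectors and not only unit vectors. -/
structure IsSphereMin (k : ℕ) (s : Multiset ℝ) : Prop where
  sumSq_eq_one : sumSq s = 1
  mul_le : ∀ t : Multiset ℝ, t.card = s.card →
    multisetHsym (2 * k) s * sumSq t ^ k ≤ multisetHsym (2 * k) t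

lemma exists_fin_map_eq_of_card_eq {α : Type*} {n : ℕ} {s : Multiset α} (hs : s.card = n) :
    ∃ x : Fin n → α, Finset.univ.val.map x = s := by
  obtain ⟨l, rfl⟩ : ∃ l : List α, ↑l = s := ⟨s.toList, s.coe_toList⟩
  obtain rfl : l.length = n := hs
  exact ⟨l.get, by rw [Fin.univ_val_map, List.ofFn_get]⟩

lemma exists_isSphereMin (k n : ℕ) [NeZero n] :
    ∃ s : Multiset ℝ, s.card = n ∧ IsSphereMin k s := by
  let coords (x : EuclideanSpace ℝ (Fin n)) : Multiset ℝ := Finset.univ.val.map x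
  have hnorm (x) : sumSq (coords x) = ‖x‖ ^ 2 := by
    rw [EuclideanSpace.real_norm_sq_eq, sumSq_map_univ]
  have hcont : Continuous fun x => multisetHsym (2 * k) (coords x) :=
    continuous_multisetHsym_map (fun i => by fun_prop) _ _
  have hhom (c : ℝ) (x) : multisetHsym (2 * k) (coords (c • x)) =
      c ^ (2 * k) * multisetHsym (2 * k) (coords x) := by
    rw [← multisetHsym_map_mul, Multiset.map_map]
    rfl
  obtain ⟨x, hx, hmin⟩ := exists_norm_eq_one_forall_mul_norm_pow_le hcont fun c _ => hhom c
  refine ⟨coords x, by simp [coords], by rw [hnorm, hx, one_pow], fun t ht => ?_⟩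
  obtain ⟨y, rfl⟩ : ∃ y, coords y = t := by
    obtain ⟨y, rfl⟩ := exists_fin_map_eq_of_card_eq (n := n) (by simpa [coords] using ht)
    exact ⟨WithLp.toLp 2 y, rfl⟩
  rw [hnorm, ← pow_mul]
  exact hmin y

namespace IsSphereMin

variable {k : ℕ} {a b : ℝ} {s : Multiset ℝ}

lemma neg_cons_replicate {n : ℕ} (hs : IsSphereMin k (Multiset.replicate (n + 1) a)) :
    IsSphereMin k (-a ::ₘ Multiset.replicate n a) := by
  have hle : multisetHsym (2 * k) (-a ::ₘ Multiset.replicate n a) ≤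
      multisetHsym (2 * k) (Multiset.replicate (n + 1) a) := by
    calc multisetHsym (2 * k) (-a ::ₘ Multiset.replicate n a)
        ≤ multisetHsym (2 * k) ((-a ::ₘ Multiset.replicate n a).map abs) :=
          (le_abs_self _).trans (abs_multisetHsym_le _ _)
      _ = multisetHsym (2 * k) (Multiset.replicate (n + 1) |a|) := by
          simp [Multiset.replicate_succ]
      _ = multisetHsym (2 * k) (Multiset.replicate (n + 1) a) := by
          rcases abs_choice a with h | h
          · rw [h]
          · simpa [h] using multisetHsym_map_mul (2 * k) (-1) (Multiset.replicate (n + 1) a)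
  refine ⟨by simpa [Multiset.replicate_succ] using hs.sumSq_eq_one, fun t ht => ?_⟩
  refine le_trans ?_ (hs.mul_le t (by simpa using ht))
  exact mul_le_mul_of_nonneg_right hle (pow_nonneg (sumSq_nonneg t) k)

lemma lagrange_multiplier_eq (hs : IsSphereMin (k + 1) (a ::ₘ s)) :
    multisetHsym (2 * k + 1) (a ::ₘ a ::ₘ s) =
      2 * (k + 1) * multisetHsym (2 * (k + 1)) (a ::ₘ s) * a := by
  set c := multisetHsym (2 * (k + 1)) (a ::ₘ s)
  have hnorm : a ^ 2 + sumSq s = 1 := by simpa using hs.sumSq_eq_one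
  have hmin : IsLocalMin
      (fun t => multisetHsym (2 * (k + 1)) (t ::ₘ s) - c * (t ^ 2 + sumSq s) ^ (k + 1)) a := by
    refine Filter.Eventually.of_forall fun t => ?_
    have ht := hs.mul_le (t ::ₘ s) (by simp)
    rw [sumSq_cons] at ht
    simpa [hnorm, c] using ht
  have hderiv := (hasDerivAt_multisetHsym_cons (2 * k + 1) a s).sub
    ((((hasDerivAt_pow 2 a).add_const (sumSq s)).pow (k + 1)).const_mul c)
  have hzero := hmin.hasDerivAt_eq_zero hderiv
  simp only [Nat.cast_add, Nat.cast_one, hnorm, add_tsub_cancel_right, one_pow, mul_one,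
    Nat.cast_ofNat, Nat.add_one_sub_one, pow_one] at hzero
  linarith

lemma multisetHsym_cons_cons_of_ne (hs : IsSphereMin (k + 1) (a ::ₘ b ::ₘ s)) (hab : a ≠ b) :
    multisetHsym (2 * k) (a ::ₘ b ::ₘ a ::ₘ b ::ₘ s) =
      2 * (k + 1) * multisetHsym (2 * (k + 1)) (a ::ₘ b ::ₘ s) := by
  have ha := hs.lagrange_multiplier_eq
  have hb := (Multiset.cons_swap a b s ▸ hs).lagrange_multiplier_eq
  rw [Multiset.cons_swap b a s] at hb
  refine mul_left_cancel₀ (sub_ne_zero.mpr hab) ?_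
  rw [← multisetHsym_cons_sub_cons, ha, hb]
  ring

end IsSphereMin

lemma exists_ne_isSphereMin_cons_cons (k n : ℕ) :
    ∃ (a b : ℝ) (s : Multiset ℝ), a ≠ b ∧ s.card = n ∧ IsSphereMin k (a ::ₘ b ::ₘ s) := by
  obtain ⟨s, hcard, hs⟩ := exists_isSphereMin k (n + 2)
  obtain ⟨a, u, rfl, hu⟩ := Multiset.card_eq_succ_iff.mp hcard
  by_cases hall : ∀ b ∈ u, b = a
  · obtain rfl : u = Multiset.replicate (n + 1) a := Multiset.eq_replicate.mpr ⟨hu, hall⟩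
    have ha : a ≠ 0 := by
      rintro rfl
      simpa [sumSq] using hs.sumSq_eq_one
    refine ⟨-a, a, Multiset.replicate n a, ?_, by simp, hs.neg_cons_replicate⟩
    simpa [neg_eq_self] using ha
  · push Not at hall
    obtain ⟨b, hb, hba⟩ := hall
    obtain ⟨v, rfl⟩ := Multiset.exists_cons_of_mem hb
    exact ⟨a, b, v, hba.symm, by simpa using hcard, hs⟩

theorem sumSq_pow_div_le_multisetHsym (k : ℕ) (s : Multiset ℝ) :
    sumSq s ^ k / (2 ^ k * Nat.factorial k) ≤ multisetHsym (2 * k) s := by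
  induction k generalizing s with
  | zero => simp [multisetHsym_zero_left]
  | succ k ih =>
    obtain ⟨a, b, u, hab, hcard, hmin⟩ := exists_ne_isSphereMin_cons_cons (k + 1) s.card
    set c := multisetHsym (2 * (k + 1)) (a ::ₘ b ::ₘ u)
    have hc : 1 / (2 ^ k * Nat.factorial k) ≤ 2 * (k + 1) * c := by
      calc (1 : ℝ) / (2 ^ k * Nat.factorial k)
          ≤ sumSq (a ::ₘ b ::ₘ a ::ₘ b ::ₘ u) ^ k / (2 ^ k * Nat.factorial k) := by
            gcongr
            refine one_le_pow₀ ?_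
            rw [sumSq_cons, sumSq_cons, hmin.sumSq_eq_one]
            linarith [sq_nonneg a, sq_nonneg b]
        _ ≤ multisetHsym (2 * k) (a ::ₘ b ::ₘ a ::ₘ b ::ₘ u) := ih _
        _ = 2 * (k + 1) * c := hmin.multisetHsym_cons_cons_of_ne hab
    have hs : c * sumSq s ^ (k + 1) ≤ multisetHsym (2 * (k + 1)) s := by
      simpa [multisetHsym_zero_cons] using hmin.mul_le (0 ::ₘ 0 ::ₘ s) (by simp [hcard])
    calc sumSq s ^ (k + 1) / (2 ^ (k + 1) * Nat.factorial (k + 1))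
        = 1 / (2 ^ k * Nat.factorial k) / (2 * (k + 1)) * sumSq s ^ (k + 1) := by
          rw [Nat.factorial_succ]
          push_cast
          field_simp
          ring
      _ ≤ c * sumSq s ^ (k + 1) := by
          refine mul_le_mul_of_nonneg_right ?_ (pow_nonneg (sumSq_nonneg s) _)
          rwa [div_le_iff₀' (by positivity)]
      _ ≤ multisetHsym (2 * (k + 1)) s := hs

/-- Hunter's inequality: for every `k ≥ 0`, `d ≥ 1` and `(x₁,…,x_d) ∈ ℝ^d`,
`h_{2k}(x₁,…,x_d) ≥ (x₁² + … + x_d²)^k / (2^k k!)`. -/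
theorem hunter_inequality (k d : ℕ) (hd : 1 ≤ d) (x : Fin d → ℝ) :
    (∑ i, x i ^ 2) ^ k / (2 ^ k * Nat.factorial k) ≤ hsym d (2 * k) x := by
  rw [hsym_eq_multisetHsym, ← sumSq_map_univ]
  exact sumSq_pow_div_le_multisetHsym k (Finset.univ.val.map x)
end
end

section
/- For all integers g ≥ 1 and d ≥ 1, H_g^d = d! · Σ_{λ ∈ Y^d} h_{2g−2}(λ) equals the number of tuples (π₁, π₂, τ₁, …, τ_{2g−2}) of permutations of {1,…,d} such that: (1) π₁π₂π₁⁻¹π₂⁻¹τ₁⋯τ_{2g−2} is the identity permutation; (2) each τ_i is a transposition; (3) writing τ_i = (s_i t_i) with 1 ≤ s_i < t_i ≤ d, one has t₁ ≤ … ≤ t_{2g−2}. -/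
noncomputable section

/-- `H_g^d = d! · Σ_{λ ∈ Y^d} h_{2g−2}(λ)`, the sum running over all Young diagrams with
exactly `d` cells. -/
def Hgd (g d : ℕ) : ℝ :=
  (Nat.factorial d) * ∑' lam : {lam : YoungDiagram // lam.card = d}, hYoung (2 * g - 2) lam.1

/-!
Symmetric polynomials in the Jucys–Murphy elements `J k = ∑ j < k, (j k)` are central in the group
algebra of the symmetric group on `d` letters. By the Garnir relations, the functional sending a
permutation to the value of the Specht polynomial of `λ` at it is an eigenvector of right
multiplication by each `J k`, the eigenvalue being the content of the `k`-th cell of `λ`. Contents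
determine `λ`, and there are as many diagrams with `d` cells as conjugacy classes, so these
functionals form a basis of the dual of the center, which diagonalizes multiplication by
`h_r(J)` with eigenvalues `h_r(λ)`.

Composing `x ↦ ∑ g, g x g⁻¹` with multiplication by `h_r(J)` yields an operator whose range lies in
the center, on which it is `d!` times multiplication by `h_r(J)`; so its trace is `d! ∑ h_r(λ)`.
In the basis of permutations, this trace is the sum over all commutators of their coefficients in
`h_r(J)`, and `h_r(J)` is the sum of the products of all monotone `r`-tuples of transpositions.
-/

section Vandermonde

open Matrix

variable {R : Type*} [CommRing R]

lemma vandermonde_update {n : ℕ} (v : Fin n → R) (k : Fin n) (y : R) :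
    vandermonde (Function.update v k y) =
      (vandermonde v).updateRow k fun p => y ^ (p : ℕ) := by
  ext i p
  obtain rfl | h := eq_or_ne i k
  · simp [vandermonde_apply]
  · simp [vandermonde_apply, updateRow_ne h, Function.update_of_ne h]

lemma sum_det_vandermonde_update_mul_pow {m : ℕ} (u : Fin m → R) (y : R) {p : ℕ} (hp : p < m) :
    ∑ j, (vandermonde (Function.update u j y)).det * u j ^ p = (vandermonde u).det * y ^ p := by
  have hcramer := congrFun
    (mulVec_cramer (vandermonde u)ᵀ fun q : Fin m => y ^ (q : ℕ)) ⟨p, hp⟩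
  simpa [mulVec, dotProduct, cramer_transpose_apply, vandermonde_update, det_transpose,
    vandermonde_apply, mul_comm] using hcramer

lemma det_vandermonde_mul_det_vandermonde {m n : ℕ} (hnm : n ≤ m) (u : Fin m → R)
    (w : Fin n → R) (k : Fin n) :
    (vandermonde u).det * (vandermonde w).det =
      ∑ j, (vandermonde (Function.update u j (w k))).det *
        (vandermonde (Function.update w k (u j))).det := by
  have hrow : (vandermonde u).det • (fun p : Fin n => w k ^ (p : ℕ)) =
      ∑ j, (vandermonde (Function.update u j (w k))).det • fun p : Fin n => u j ^ (p : ℕ) := by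
    ext p
    simp [sum_det_vandermonde_update_mul_pow u (w k) (p.2.trans_le hnm)]
  -- Both sides are values of the linear map sending `b` to `det W` with row `k` replaced by `b`.
  have hlin := congrArg (cramer (vandermonde w)ᵀ) hrow
  simp only [map_sum, map_smul] at hlin
  simpa only [Finset.sum_apply, Pi.smul_apply, smul_eq_mul, cramer_transpose_apply,
    ← vandermonde_update, Function.update_eq_self] using congrFun hlin k

end Vandermonde

section Specht

variable {R : Type*} [CommRing R] (lam : YoungDiagram)

/-- The Vandermonde determinant of the entries of `x` in column `c` of `lam`. -/
def colDet (x : ℕ × ℕ → R) (c : ℕ) : R :=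
  (Matrix.vandermonde fun r : Fin (lam.colLen c) => x (r, c)).det

/-- The Specht polynomial of `lam`, as a function of variables `x` placed in the cells. -/
def specht (x : ℕ × ℕ → R) : R :=
  ∏ c ∈ Finset.range (lam.rowLen 0), colDet lam x c

variable {lam}

lemma mem_range_rowLen_zero {r c : ℕ} (h : (r, c) ∈ lam) : c ∈ Finset.range (lam.rowLen 0) :=
  Finset.mem_range.2 (YoungDiagram.mem_iff_lt_rowLen.1 (lam.up_left_mem r.zero_le le_rfl h))

lemma colDet_congr {x y : ℕ × ℕ → R} {c : ℕ} (h : ∀ r, x (r, c) = y (r, c)) :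
    colDet lam x c = colDet lam y c := by
  simp only [colDet, h]

lemma colDet_comp_swap_of_ne (x : ℕ × ℕ → R) {c : ℕ} {p q : ℕ × ℕ} (hp : p.2 ≠ c) (hq : q.2 ≠ c) :
    colDet lam (x ∘ Equiv.swap p q) c = colDet lam x c :=
  colDet_congr fun r => congrArg x <| Equiv.swap_apply_of_ne_of_ne
    (by rintro rfl; exact hp rfl) (by rintro rfl; exact hq rfl)

lemma injective_cell_of_row (n c : ℕ) : Function.Injective fun r : Fin n => ((r : ℕ), c) :=
  fun _ _ h => Fin.ext (congrArg Prod.fst h)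

lemma colDet_comp_swap_left (x : ℕ × ℕ → R) {c : ℕ} (r : Fin (lam.colLen c)) {q : ℕ × ℕ}
    (hq : q.2 ≠ c) :
    colDet lam (x ∘ Equiv.swap ((r : ℕ), c) q) c = (Matrix.vandermonde
      (Function.update (fun r : Fin (lam.colLen c) => x (r, c)) r (x q))).det := by
  unfold colDet
  congr 2
  ext r'
  obtain rfl | h := eq_or_ne r' r
  · simp
  · rw [Function.update_of_ne h, Function.comp_apply, Equiv.swap_apply_of_ne_of_ne]
    · exact (injective_cell_of_row _ c).ne h
    · rintro rfl; exact hq rfl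

lemma colDet_comp_swap_same_column (x : ℕ × ℕ → R) {c : ℕ} {r s : Fin (lam.colLen c)}
    (hrs : r ≠ s) :
    colDet lam (x ∘ Equiv.swap ((r : ℕ), c) ((s : ℕ), c)) c = -colDet lam x c := by
  have hsubmatrix : Matrix.vandermonde (fun i : Fin (lam.colLen c) =>
      (x ∘ Equiv.swap ((r : ℕ), c) ((s : ℕ), c)) (i, c)) =
        (Matrix.vandermonde fun i : Fin (lam.colLen c) => x (i, c)).submatrix
          (Equiv.swap r s) id := by
    ext i j
    have hswap := (injective_cell_of_row (lam.colLen c) c).swap_apply r s i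
    simp only [Matrix.vandermonde_apply, Matrix.submatrix_apply, Function.comp_apply, id_eq, hswap]
  rw [colDet, hsubmatrix, Matrix.det_permute, Equiv.Perm.sign_swap hrs, colDet]
  simp

lemma specht_comp_swap_same_column (x : ℕ × ℕ → R) {r s c : ℕ} (hr : (r, c) ∈ lam)
    (hs : (s, c) ∈ lam) (hrs : r ≠ s) :
    specht lam (x ∘ Equiv.swap (r, c) (s, c)) = -specht lam x := by
  have hc := mem_range_rowLen_zero hr
  have hothers : ∀ c' ∈ (Finset.range (lam.rowLen 0)).erase c,
      colDet lam (x ∘ Equiv.swap (r, c) (s, c)) c' = colDet lam x c' := fun c' hc' =>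
    colDet_comp_swap_of_ne x (Finset.ne_of_mem_erase hc').symm (Finset.ne_of_mem_erase hc').symm
  rw [YoungDiagram.mem_iff_lt_colLen] at hr hs
  have hsame : colDet lam (x ∘ Equiv.swap (r, c) (s, c)) c = -colDet lam x c :=
    colDet_comp_swap_same_column (r := ⟨r, hr⟩) (s := ⟨s, hs⟩) x (by simpa using hrs)
  rw [specht, specht, ← Finset.mul_prod_erase _ _ hc, ← Finset.mul_prod_erase _ _ hc, hsame,
    Finset.prod_congr rfl hothers, neg_mul]

lemma sum_specht_comp_swap_column (x : ℕ × ℕ → R) {r c c' : ℕ} (hr : (r, c) ∈ lam)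
    (hc' : c' < c) :
    ∑ r' ∈ Finset.range (lam.colLen c'), specht lam (x ∘ Equiv.swap (r', c') (r, c)) =
      specht lam x := by
  have hc := mem_range_rowLen_zero hr
  have hcc' : c' ∈ (Finset.range (lam.rowLen 0)).erase c :=
    Finset.mem_erase.2 ⟨hc'.ne, mem_range_rowLen_zero (lam.up_left_mem le_rfl hc'.le hr)⟩
  have hothers (r' : ℕ) : ∀ t ∈ ((Finset.range (lam.rowLen 0)).erase c).erase c',
      colDet lam (x ∘ Equiv.swap (r', c') (r, c)) t = colDet lam x t := fun t ht => by
    simp only [Finset.mem_erase] at ht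
    exact colDet_comp_swap_of_ne x ht.1.symm ht.2.1.symm
  have hexchange : ∑ r' ∈ Finset.range (lam.colLen c'),
      colDet lam (x ∘ Equiv.swap (r', c') (r, c)) c *
        colDet lam (x ∘ Equiv.swap (r', c') (r, c)) c' = colDet lam x c * colDet lam x c' := by
    have hrow := YoungDiagram.mem_iff_lt_colLen.1 hr
    rw [mul_comm, colDet, colDet, det_vandermonde_mul_det_vandermonde (lam.colLen_anti c' c hc'.le)
      _ _ ⟨r, hrow⟩, Finset.sum_range]
    refine Finset.sum_congr rfl fun j _ => ?_
    rw [mul_comm, colDet_comp_swap_left x j hc'.ne', Equiv.swap_comm,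
      colDet_comp_swap_left x ⟨r, hrow⟩ hc'.ne]
  simp only [specht, ← Finset.mul_prod_erase _ _ hc, ← Finset.mul_prod_erase _ _ hcc',
    Finset.prod_congr rfl (hothers _), ← mul_assoc, ← Finset.sum_mul, hexchange]

/-- The cells of `lam` preceding `q` when the columns are read from left to right, each from top
to bottom. -/
def cellsBefore (lam : YoungDiagram) (q : ℕ × ℕ) : Finset (ℕ × ℕ) :=
  lam.cells.filter fun p => toLex p.swap < toLex q.swap

lemma sum_cellsBefore {M : Type*} [AddCommMonoid M] (f : ℕ × ℕ → M) {r c : ℕ} (h : (r, c) ∈ lam) :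
    ∑ p ∈ cellsBefore lam (r, c), f p =
      (∑ c' ∈ Finset.range c, ∑ r' ∈ Finset.range (lam.colLen c'), f (r', c')) +
        ∑ r' ∈ Finset.range r, f (r', c) := by
  rw [← Finset.sum_filter_add_sum_filter_not _ (fun p : ℕ × ℕ => p.2 < c), Finset.sum_sigma']
  congr 1
  · refine Finset.sum_nbij' (fun p => ⟨p.2, p.1⟩) (fun s => (s.2, s.1)) ?_ ?_ ?_ ?_ ?_ <;>
      simp +contextual [cellsBefore, Prod.Lex.toLex_lt_toLex, YoungDiagram.mem_iff_lt_colLen]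
  · refine Finset.sum_nbij' Prod.fst (fun r' => (r', c)) ?_ ?_ ?_ ?_ ?_ <;>
      simp only [cellsBefore, Finset.mem_filter, Prod.Lex.toLex_lt_toLex, Prod.fst_swap,
        Prod.snd_swap, YoungDiagram.mem_cells, Finset.mem_range]
    · grind
    · exact fun r' hr' => ⟨⟨lam.up_left_mem hr'.le le_rfl h, Or.inr ⟨trivial, hr'⟩⟩, lt_irrefl c⟩
    all_goals grind

lemma sum_cellsBefore_specht (x : ℕ × ℕ → R) {q : ℕ × ℕ} (hq : q ∈ lam) :
    ∑ p ∈ cellsBefore lam q, specht lam (x ∘ Equiv.swap p q) = (content q : R) * specht lam x := by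
  obtain ⟨r, c⟩ := q
  have hleft : ∀ c' ∈ Finset.range c, ∑ r' ∈ Finset.range (lam.colLen c'),
      specht lam (x ∘ Equiv.swap (r', c') (r, c)) = specht lam x := fun c' hc' =>
    sum_specht_comp_swap_column x hq (Finset.mem_range.1 hc')
  have habove : ∀ r' ∈ Finset.range r,
      specht lam (x ∘ Equiv.swap (r', c) (r, c)) = -specht lam x := fun r' hr' =>
    have hlt := Finset.mem_range.1 hr'
    specht_comp_swap_same_column x (lam.up_left_mem hlt.le le_rfl hq) hq hlt.ne
  rw [sum_cellsBefore _ hq, Finset.sum_congr rfl hleft, Finset.sum_congr rfl habove]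
  simp [content]
  ring

lemma specht_ne_zero [IsDomain R] {x : ℕ × ℕ → R} (hx : Set.InjOn x lam.cells) :
    specht lam x ≠ 0 := by
  refine Finset.prod_ne_zero_iff.2 fun c _ => Matrix.det_vandermonde_ne_zero_iff.2 fun a b hab => ?_
  have hmem (r : Fin (lam.colLen c)) : ((r : ℕ), c) ∈ lam.cells :=
    YoungDiagram.mem_iff_lt_colLen.2 r.2
  exact injective_cell_of_row _ c (hx (hmem a) (hmem b) hab)

end Specht

section YoungDiagrams

lemma card_diagonal_lt {lam mu : YoungDiagram} {p : ℕ × ℕ} (hlam : p ∈ lam) (hmu : p ∉ mu) :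
    (mu.cells.filter fun q => content q = content p).card <
      (lam.cells.filter fun q => content q = content p).card := by
  refine Finset.card_lt_card ((Finset.ssubset_iff_of_subset fun q hq => ?_).2
    ⟨p, by simpa using hlam, by simpa using hmu⟩)
  obtain ⟨hqmu, hqp⟩ := Finset.mem_filter.1 hq
  have hcomparable : q ≤ p ∨ p ≤ q := by
    simp only [Prod.le_def, content] at hqp ⊢
    lia
  have hle : q ≤ p := hcomparable.resolve_right fun h => hmu (mu.isLowerSet h hqmu)
  exact Finset.mem_filter.2 ⟨lam.isLowerSet hle hlam, hqp⟩

lemma eq_of_map_content_eq {lam mu : YoungDiagram}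
    (h : lam.cells.val.map content = mu.cells.val.map content) : lam = mu := by
  have hdiagonal (c : ℤ) : (lam.cells.filter fun q => content q = c).card =
      (mu.cells.filter fun q => content q = c).card := by
    have hcount := congrArg (Multiset.count c) h
    simp only [Multiset.count_map, eq_comm (a := c)] at hcount
    exact hcount
  ext p
  by_contra hp
  by_cases hlam : p ∈ lam
  · exact (card_diagonal_lt hlam fun hmu => hp (iff_of_true hlam hmu)).ne (hdiagonal _).symm
  · exact (card_diagonal_lt (by_contra fun hmu => hp (iff_of_false hlam hmu)) hlam).ne (hdiagonal _)

lemma sum_rowLens (lam : YoungDiagram) : lam.rowLens.sum = lam.card := by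
  have hrow : ∀ p ∈ lam.cells, p.1 ∈ Finset.range (lam.colLen 0) := fun p hp =>
    Finset.mem_range.2 (YoungDiagram.mem_iff_lt_colLen.1 (lam.up_left_mem le_rfl p.2.zero_le hp))
  rw [YoungDiagram.card, Finset.card_eq_sum_card_fiberwise hrow]
  calc lam.rowLens.sum = ∑ i ∈ Finset.range (lam.colLen 0), lam.rowLen i := rfl
    _ = _ := Finset.sum_congr rfl fun i _ => lam.rowLen_eq_card

/-- The set `Y^d` of Young diagrams with exactly `d` cells. -/
abbrev DiagramOfCard (d : ℕ) : Type := {lam : YoungDiagram // lam.card = d}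

variable {d : ℕ}

/-- The partition of `d` formed by the row lengths of a Young diagram with `d` cells. -/
def rowPartition (lam : DiagramOfCard d) : Nat.Partition d where
  parts := lam.1.rowLens
  parts_pos := lam.1.pos_of_mem_rowLens _
  parts_sum := (sum_rowLens lam.1).trans lam.2

lemma rowPartition_bijective : Function.Bijective (rowPartition (d := d)) := by
  refine ⟨fun lam mu h => Subtype.ext ?_, fun p => ?_⟩
  · have hrowLens : lam.1.rowLens = mu.1.rowLens :=
      (Multiset.coe_eq_coe.1 (congrArg Nat.Partition.parts h)).eq_of_sortedGE
        lam.1.rowLens_sorted mu.1.rowLens_sorted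
    exact YoungDiagram.equivListRowLens.injective (Subtype.ext hrowLens)
  · have hrowLens : (YoungDiagram.ofRowLens (p.parts.sort (· ≥ ·))
        (p.parts.pairwise_sort (· ≥ ·)).sortedGE).rowLens = p.parts.sort (· ≥ ·) :=
      YoungDiagram.rowLens_ofRowLens_eq_self fun x hx => p.parts_pos ((Multiset.mem_sort _).1 hx)
    have hcard : (YoungDiagram.ofRowLens (p.parts.sort (· ≥ ·))
        (p.parts.pairwise_sort (· ≥ ·)).sortedGE).card = d := by
      rw [← sum_rowLens, hrowLens, ← Multiset.sum_coe, Multiset.sort_eq, p.parts_sum]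
    exact ⟨⟨_, hcard⟩, Nat.Partition.ext ((congrArg _ hrowLens).trans (Multiset.sort_eq ..))⟩

instance : Fintype (DiagramOfCard d) :=
  Fintype.ofInjective rowPartition rowPartition_bijective.injective

/-- The cells of `lam` as pairs (column, row), ordered lexicographically: columns from left to
right, each from top to bottom. -/
def lexCells (lam : YoungDiagram) : Finset (ℕ ×ₗ ℕ) :=
  lam.cells.map ((Equiv.prodComm ℕ ℕ).trans toLex).toEmbedding

/-- The enumeration of the cells of a Young diagram by columns, from left to right, each column
being read from top to bottom. -/
def colReading (lam : DiagramOfCard d) : Fin d ≃ lam.1.cells :=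
  ((lexCells lam.1).orderIsoOfFin ((Finset.card_map _).trans lam.2)).toEquiv.trans
    (Equiv.subtypeEquiv _ fun _ => (Finset.mem_map' _).symm).symm

lemma colReading_lt_iff (lam : DiagramOfCard d) (j k : Fin d) :
    toLex (colReading lam j : ℕ × ℕ).swap < toLex (colReading lam k : ℕ × ℕ).swap ↔ j < k := by
  have hlex (i : Fin d) : toLex (colReading lam i : ℕ × ℕ).swap =
      (lexCells lam.1).orderIsoOfFin ((Finset.card_map _).trans lam.2) i :=
    rfl
  rw [hlex, hlex, Subtype.coe_lt_coe, OrderIso.lt_iff_lt]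

end YoungDiagrams

section TraceOfEigenfunctionals

lemma trace_eq_sum_of_dual_eigenvectors {K V Y : Type*} [Field K] [AddCommGroup V] [Module K V]
    [FiniteDimensional K V] [Fintype Y] {T : V →ₗ[K] V} {f : Y → Module.Dual K V} {c : Y → K}
    (hf : LinearIndependent K f) (hcard : Module.finrank K V ≤ Fintype.card Y)
    (heigen : ∀ i, f i ∘ₗ T = c i • f i) : LinearMap.trace K V T = ∑ i, c i := by
  classical
  have hfinrank : Fintype.card Y = Module.finrank K (Module.Dual K V) :=
    le_antisymm hf.fintype_card_le_finrank (Subspace.dual_finrank_eq.trans_le hcard)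
  let b := Module.Basis.mk hf (hf.span_eq_top_of_card_eq_finrank' hfinrank).ge
  rw [← LinearMap.trace_transpose', LinearMap.trace_eq_matrix_trace K b, Matrix.trace]
  refine Finset.sum_congr rfl fun i _ => ?_
  have hbi : Module.Dual.transpose T (b i) = c i • b i := by
    rw [Module.Basis.mk_apply]
    exact heigen i
  rw [Matrix.diag_apply, LinearMap.toMatrix_apply, hbi, map_smul, Finsupp.smul_apply,
    Module.Basis.repr_self, Finsupp.single_eq_same, smul_eq_mul, mul_one]

end TraceOfEigenfunctionals

section GroupAlgebra

open MonoidAlgebra (of)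
open scoped commutatorElement

variable {R G : Type*} [CommRing R] [Group G]

lemma mem_center_of_commute_of {z : MonoidAlgebra R G} (h : ∀ g, Commute (of R G g) z) :
    z ∈ Subalgebra.center R (MonoidAlgebra R G) := by
  refine Subalgebra.mem_center_iff.2 fun a => ?_
  induction a using MonoidAlgebra.induction_on with
  | of g => exact h g
  | add a b ha hb => rw [add_mul, mul_add, ha, hb]
  | smul r a ha => rw [smul_mul_assoc, mul_smul_comm, ha]

lemma coeff_eq_of_isConj {z : MonoidAlgebra R G} (hz : z ∈ Subalgebra.center R (MonoidAlgebra R G))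
    {g h : G} (hgh : IsConj g h) : z.coeff g = z.coeff h := by
  obtain ⟨c, rfl⟩ := isConj_iff.1 hgh
  have hcomm := congrArg (fun a => a.coeff (c * g))
    (Subalgebra.mem_center_iff.1 hz (MonoidAlgebra.single c 1))
  simpa [MonoidAlgebra.coeff_single_mul_apply, MonoidAlgebra.coeff_mul_single_apply] using hcomm

lemma finrank_center_le_card_conjClasses [Nontrivial R] [Finite G] :
    Module.finrank R (Subalgebra.center R (MonoidAlgebra R G)) ≤ Nat.card (ConjClasses G) := by
  have := Fintype.ofFinite (ConjClasses G)
  let coeffOnClasses : Subalgebra.center R (MonoidAlgebra R G) →ₗ[R] ConjClasses G → R :=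
    LinearMap.pi fun c => Finsupp.lapply (Quotient.out c) ∘ₗ
      (MonoidAlgebra.coeffLinearEquiv R).toLinearMap ∘ₗ
        (Subalgebra.center R (MonoidAlgebra R G)).val.toLinearMap
  have hinjective : Function.Injective coeffOnClasses := fun a b hab => by
    ext g
    have hout : IsConj (Quotient.out (ConjClasses.mk g)) g :=
      ConjClasses.mk_eq_mk_iff_isConj.1 (Quotient.out_eq _)
    rw [← coeff_eq_of_isConj a.2 hout, ← coeff_eq_of_isConj b.2 hout]
    exact congrFun hab (ConjClasses.mk g)
  have hle := LinearMap.finrank_le_finrank_of_injective hinjective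
  rwa [Module.finrank_fintype_fun_eq_card, ← Nat.card_eq_fintype_card] at hle

variable [Fintype G]

variable (R G) in
/-- The conjugation sum `x ↦ ∑ g, g x g⁻¹`, which is `card G` times a projection onto the center
when `card G` is invertible. -/
def conjSum : MonoidAlgebra R G →ₗ[R] MonoidAlgebra R G :=
  ∑ g : G, LinearMap.mulLeft R (of R G g) ∘ₗ LinearMap.mulRight R (of R G g⁻¹)

lemma conjSum_apply (x : MonoidAlgebra R G) :
    conjSum R G x = ∑ g, of R G g * x * of R G g⁻¹ := by
  simp [conjSum, mul_assoc]

lemma conjSum_mem_center (x : MonoidAlgebra R G) :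
    conjSum R G x ∈ Subalgebra.center R (MonoidAlgebra R G) := by
  refine mem_center_of_commute_of fun h => ?_
  rw [Commute, SemiconjBy, conjSum_apply, Finset.mul_sum, Finset.sum_mul]
  refine Fintype.sum_equiv (Equiv.mulLeft h) _ _ fun g => ?_
  have hinv : of R G h⁻¹ * of R G h = 1 := by rw [← map_mul, inv_mul_cancel, map_one]
  simp only [Equiv.coe_mulLeft, mul_inv_rev, map_mul, mul_assoc, hinv, mul_one]

lemma conjSum_of_mem_center {x : MonoidAlgebra R G}
    (hx : x ∈ Subalgebra.center R (MonoidAlgebra R G)) :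
    conjSum R G x = Fintype.card G • x := by
  have hconj (g : G) : of R G g * x * of R G g⁻¹ = x := by
    rw [Subalgebra.mem_center_iff.1 hx, mul_assoc, ← map_mul, mul_inv_cancel, map_one, mul_one]
  simp only [conjSum_apply, hconj, Finset.sum_const, Finset.card_univ]

lemma trace_mulRight_comp_conjSum (z : MonoidAlgebra R G) :
    LinearMap.trace R _ (LinearMap.mulRight R z ∘ₗ conjSum R G) =
      ∑ x : G, ∑ y : G, z.coeff ⁅x, y⁆ := by
  classical
  rw [LinearMap.trace_eq_matrix_trace R (MonoidAlgebra.basis G R), Matrix.trace, Finset.sum_comm]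
  refine Fintype.sum_equiv (Equiv.inv G) _ _ fun x => ?_
  rw [Matrix.diag_apply, LinearMap.toMatrix_apply, LinearMap.comp_apply, conjSum_apply,
    LinearMap.mulRight_apply, Finset.sum_mul, MonoidAlgebra.basis_apply]
  change (∑ g : G, _ : MonoidAlgebra R G).coeff x = _
  rw [MonoidAlgebra.coeff_sum, Finset.sum_apply']
  refine Finset.sum_congr rfl fun g _ => ?_
  rw [← MonoidAlgebra.of_apply, ← map_mul, ← map_mul, MonoidAlgebra.of_apply,
    MonoidAlgebra.coeff_single_mul_apply, one_mul, commutatorElement_def, Equiv.inv_apply]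
  congr 1
  group

lemma sum_coeff_commutatorElement [IsDomain R] [IsPrincipalIdealRing R] {z : MonoidAlgebra R G}
    (hz : z ∈ Subalgebra.center R (MonoidAlgebra R G)) :
    ∑ x : G, ∑ y : G, z.coeff ⁅x, y⁆ =
      Fintype.card G * Algebra.trace R (Subalgebra.center R (MonoidAlgebra R G)) ⟨z, hz⟩ := by
  have hrange (x : MonoidAlgebra R G) : (LinearMap.mulRight R z ∘ₗ conjSum R G) x ∈
      Subalgebra.toSubmodule (Subalgebra.center R (MonoidAlgebra R G)) :=
    Subalgebra.mul_mem _ (conjSum_mem_center x) hz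
  have hrestrict (x : Subalgebra.center R (MonoidAlgebra R G)) :
      LinearMap.mulRight R z (conjSum R G x) = (Fintype.card G : R) • (⟨z, hz⟩ * x).1 := by
    rw [conjSum_of_mem_center x.2, LinearMap.mulRight_apply, smul_mul_assoc,
      Nat.cast_smul_eq_nsmul, mul_comm]
    rfl
  rw [← trace_mulRight_comp_conjSum, ← LinearMap.trace_restrict_eq_of_forall_mem _ _ hrange,
    Algebra.trace_apply, ← smul_eq_mul, ← map_smul]
  exact congrArg (LinearMap.trace R _) (LinearMap.ext fun x => Subtype.ext (hrestrict x))

end GroupAlgebra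

section JucysMurphy

open MonoidAlgebra (of)
open MvPolynomial (C X rename)

variable {ι : Type*} [Fintype ι] [LinearOrder ι] (R : Type*) [CommRing R]

/-- The Jucys–Murphy element of `k`: the sum of the transpositions `(j k)` over all `j < k`. -/
def jucysMurphy (k : ι) : MonoidAlgebra R (Equiv.Perm ι) :=
  ∑ j with j < k, of R _ (Equiv.swap j k)

lemma of_mul_jucysMurphy (k : ι) (π : Equiv.Perm ι) :
    of R _ π * jucysMurphy R k = (∑ j with j < k, of R _ (Equiv.swap (π j) (π k))) * of R _ π := by
  simp only [jucysMurphy, Finset.mul_sum, Finset.sum_mul, ← map_mul, Equiv.mul_swap_eq_swap_mul]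

lemma commute_of_swap_jucysMurphy {a b k : ι} (ha : a ≠ k) (hb : b ≠ k) (hab : a < k ↔ b < k) :
    Commute (of R _ (Equiv.swap a b)) (jucysMurphy R k) := by
  have hlt (j : ι) : j < k ↔ Equiv.swap a b j < k := by
    rw [Equiv.swap_apply_def]
    split_ifs with hja hjb
    · rw [hja, hab]
    · rw [hjb, hab]
    · rfl
  rw [Commute, SemiconjBy, of_mul_jucysMurphy, Equiv.swap_apply_of_ne_of_ne ha.symm hb.symm]
  congr 1
  exact Finset.sum_equiv (Equiv.swap a b) (by simpa using hlt) fun _ _ => rfl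

lemma commute_jucysMurphy (j k : ι) : Commute (jucysMurphy R j) (jucysMurphy R k) := by
  wlog hjk : j < k generalizing j k
  · obtain rfl | hkj := (not_lt.1 hjk).eq_or_lt
    · exact Commute.refl _
    · exact (this k j hkj).symm
  refine Commute.sum_left _ _ _ fun i hi => ?_
  have hik := (Finset.mem_filter.1 hi).2.trans hjk
  exact commute_of_swap_jucysMurphy R hik.ne hjk.ne (iff_of_true hik hjk)

lemma jucysMurphy_of_covBy {a b : ι} (h : a ⋖ b) :
    jucysMurphy R b = (∑ j with j < a, of R _ (Equiv.swap j b)) + of R _ (Equiv.swap a b) := by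
  have hlt : (Finset.univ.filter fun j => j < b) =
      insert a (Finset.univ.filter fun j => j < a) := by
    ext j
    simp [h.lt_iff_le_left, le_iff_eq_or_lt]
  rw [jucysMurphy, hlt, Finset.sum_insert (by simp), add_comm]

lemma swap_mul_jucysMurphy_left {a b : ι} (h : a ⋖ b) :
    of R _ (Equiv.swap a b) * jucysMurphy R a =
      jucysMurphy R b * of R _ (Equiv.swap a b) - 1 := by
  have hconj : ∑ j with j < a, of R _ (Equiv.swap (Equiv.swap a b j) (Equiv.swap a b a)) =
      ∑ j with j < a, of R _ (Equiv.swap j b) := Finset.sum_congr rfl fun j hj => by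
    have hja := (Finset.mem_filter.1 hj).2
    rw [Equiv.swap_apply_left, Equiv.swap_apply_of_ne_of_ne hja.ne (hja.trans h.lt).ne]
  rw [of_mul_jucysMurphy, hconj, jucysMurphy_of_covBy R h, add_mul, ← map_mul,
    Equiv.swap_mul_self, map_one, add_sub_cancel_right]

lemma swap_mul_jucysMurphy_right {a b : ι} (h : a ⋖ b) :
    of R _ (Equiv.swap a b) * jucysMurphy R b =
      jucysMurphy R a * of R _ (Equiv.swap a b) + 1 := by
  have hsq : of R _ (Equiv.swap a b) * of R _ (Equiv.swap a b) = 1 := by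
    rw [← map_mul, Equiv.swap_mul_self, map_one]
  have hleft := congrArg (fun z => of R _ (Equiv.swap a b) * z * of R _ (Equiv.swap a b))
    (swap_mul_jucysMurphy_left R h)
  simp only [mul_sub, sub_mul, mul_one, mul_assoc, hsq] at hleft
  rw [← mul_assoc, hsq, one_mul] at hleft
  exact (eq_sub_iff_add_eq.1 hleft).symm

open scoped IsMulCommutative in
/-- Evaluation of polynomials at the Jucys–Murphy elements, which commute. -/
def jmEval : MvPolynomial ι R →ₐ[R] MonoidAlgebra R (Equiv.Perm ι) :=
  have := Algebra.isMulCommutative_adjoin R (s := Set.range (jucysMurphy (ι := ι) R)) <| by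
    rintro _ ⟨j, rfl⟩ _ ⟨k, rfl⟩
    exact commute_jucysMurphy R j k
  let φ : MvPolynomial ι R →ₐ[R] Algebra.adjoin R (Set.range (jucysMurphy (ι := ι) R)) :=
    MvPolynomial.aeval fun k => ⟨jucysMurphy R k, Algebra.subset_adjoin ⟨k, rfl⟩⟩
  (Algebra.adjoin R _).val.comp φ

@[simp]
lemma jmEval_X (k : ι) : jmEval R (X k) = jucysMurphy R k := by
  simp [jmEval]

lemma exists_swap_mul_jucysMurphy {a b : ι} (h : a ⋖ b) (j : ι) :
    ∃ c : R, (X a - X b) * C c = X (Equiv.swap a b j) - X j ∧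
      of R _ (Equiv.swap a b) * jucysMurphy R j =
        jucysMurphy R (Equiv.swap a b j) * of R _ (Equiv.swap a b) + algebraMap R _ c := by
  by_cases hja : j = a
  · subst hja
    refine ⟨-1, by simp, ?_⟩
    rw [swap_mul_jucysMurphy_left R h, Equiv.swap_apply_left, map_neg, map_one, sub_eq_add_neg]
  by_cases hjb : j = b
  · subst hjb
    refine ⟨1, by simp, ?_⟩
    rw [swap_mul_jucysMurphy_right R h, Equiv.swap_apply_right, map_one]
  have hlt : a < j ↔ b < j := by
    rw [h.lt_iff_le_right, le_iff_lt_or_eq, or_iff_left (Ne.symm hjb)]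
  refine ⟨0, by simp [Equiv.swap_apply_of_ne_of_ne hja hjb], ?_⟩
  rw [Equiv.swap_apply_of_ne_of_ne hja hjb, map_zero, add_zero,
    (commute_of_swap_jucysMurphy R (Ne.symm hja) (Ne.symm hjb) hlt).eq]

-- The polynomial `q` is the divided difference of `p`, which vanishes when `p` is symmetric.
lemma exists_swap_mul_jmEval {a b : ι} (h : a ⋖ b) (p : MvPolynomial ι R) :
    ∃ q, (X a - X b) * q = rename (Equiv.swap a b) p - p ∧
      of R _ (Equiv.swap a b) * jmEval R p =
        jmEval R (rename (Equiv.swap a b) p) * of R _ (Equiv.swap a b) + jmEval R q := by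
  induction p using MvPolynomial.induction_on with
  | C r =>
    refine ⟨0, by simp, ?_⟩
    rw [MvPolynomial.rename_C, map_zero, add_zero, ← MvPolynomial.algebraMap_eq, AlgHom.commutes,
      Algebra.commutes]
  | add p₁ p₂ h₁ h₂ =>
    obtain ⟨q₁, hq₁, hp₁⟩ := h₁
    obtain ⟨q₂, hq₂, hp₂⟩ := h₂
    refine ⟨q₁ + q₂, ?_, ?_⟩
    · rw [mul_add, hq₁, hq₂, map_add]
      ring
    · simp only [map_add, mul_add, hp₁, hp₂, add_mul]
      abel
  | mul_X p j hp =>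
    obtain ⟨q, hq, hp⟩ := hp
    obtain ⟨c, hc, hj⟩ := exists_swap_mul_jucysMurphy R h j
    refine ⟨q * X j + rename (Equiv.swap a b) p * C c, ?_, ?_⟩
    · rw [map_mul, MvPolynomial.rename_X]
      linear_combination X j * hq + rename (Equiv.swap a b) p * hc
    · simp only [map_mul, map_add, MvPolynomial.rename_X, jmEval_X,
        ← MvPolynomial.algebraMap_eq, AlgHom.commutes]
      rw [← mul_assoc, hp, add_mul, mul_assoc _ (of R _ _), hj]
      noncomm_ring

variable {R}

lemma commute_of_swap_jmEval [IsDomain R] {a b : ι} (h : a ⋖ b) {p : MvPolynomial ι R}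
    (hp : p.IsSymmetric) : Commute (of R _ (Equiv.swap a b)) (jmEval R p) := by
  obtain ⟨q, hq, hcomm⟩ := exists_swap_mul_jmEval R h p
  rw [hp, sub_self, mul_eq_zero] at hq
  have hne : (X a - X b : MvPolynomial ι R) ≠ 0 :=
    sub_ne_zero.2 (MvPolynomial.X_injective.ne h.lt.ne)
  rw [hp, hq.resolve_left hne, map_zero, add_zero] at hcomm
  exact hcomm

lemma jmEval_mem_center [IsDomain R] {d : ℕ} {p : MvPolynomial (Fin d) R} (hp : p.IsSymmetric) :
    jmEval R p ∈ Subalgebra.center R (MonoidAlgebra R (Equiv.Perm (Fin d))) := by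
  refine mem_center_of_commute_of fun π => ?_
  obtain _ | n := d
  · rw [Subsingleton.elim π 1, map_one]
    exact Commute.one_left _
  have hπ : π ∈ Submonoid.closure (Set.range fun i : Fin n => Equiv.swap i.castSucc i.succ) := by
    rw [Equiv.Perm.mclosure_swap_castSucc_succ]
    exact Submonoid.mem_top π
  induction hπ using Submonoid.closure_induction with
  | mem _ h =>
    obtain ⟨i, rfl⟩ := h
    exact commute_of_swap_jmEval (by simp) hp
  | one => rw [map_one]; exact Commute.one_left _
  | mul σ τ _ _ hσ hτ => rw [map_mul]; exact hσ.mul_left hτ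

end JucysMurphy

section SpechtFunctionals

open MonoidAlgebra (of)
open MvPolynomial (C X)

variable {d : ℕ} {R : Type*} [CommRing R]

lemma colReading_val_injective (lam : DiagramOfCard d) :
    Function.Injective fun k => (colReading lam k : ℕ × ℕ) :=
  Subtype.val_injective.comp (colReading lam).injective

lemma sum_lt_comp_colReading {M : Type*} [AddCommMonoid M] (lam : DiagramOfCard d)
    (f : ℕ × ℕ → M) (k : Fin d) :
    ∑ j with j < k, f (colReading lam j) = ∑ p ∈ cellsBefore lam.1 (colReading lam k), f p := by
  refine Finset.sum_nbij (fun j => (colReading lam j : ℕ × ℕ)) (fun j hj => ?_)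
    (colReading_val_injective lam).injOn (fun p hp => ?_) fun _ _ => rfl
  · exact Finset.mem_filter.2
      ⟨(colReading lam j).2, (colReading_lt_iff lam j k).2 (Finset.mem_filter.1 hj).2⟩
  · obtain ⟨hcell, hlt⟩ := Finset.mem_filter.1 (Finset.mem_coe.1 hp)
    obtain ⟨j, hj⟩ := (colReading lam).surjective ⟨p, hcell⟩
    obtain rfl : (colReading lam j : ℕ × ℕ) = p := congrArg Subtype.val hj
    exact ⟨j, by simpa using (colReading_lt_iff lam j k).1 hlt, rfl⟩

/-- The filling of the cells of `lam`, in the order of `colReading`, with the entries of `x`; the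
value off `lam` is immaterial. -/
def fillCells (lam : DiagramOfCard d) (x : Fin d → R) : ℕ × ℕ → R :=
  Function.extend (fun k => (colReading lam k : ℕ × ℕ)) x 0

@[simp]
lemma fillCells_colReading (lam : DiagramOfCard d) (x : Fin d → R) (k : Fin d) :
    fillCells lam x (colReading lam k) = x k :=
  (colReading_val_injective lam).extend_apply x 0 k

lemma fillCells_comp_swap (lam : DiagramOfCard d) (x : Fin d → R) (j k : Fin d) :
    fillCells lam (x ∘ Equiv.swap j k) =
      fillCells lam x ∘ Equiv.swap (colReading lam j : ℕ × ℕ) (colReading lam k) := by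
  funext p
  rw [Function.comp_apply]
  by_cases hp : p ∈ lam.1.cells
  · obtain ⟨i, hi⟩ := (colReading lam).surjective ⟨p, hp⟩
    obtain rfl : (colReading lam i : ℕ × ℕ) = p := congrArg Subtype.val hi
    rw [(colReading_val_injective lam).swap_apply, fillCells_colReading, fillCells_colReading]
    rfl
  · have hne (i : Fin d) : p ≠ colReading lam i := fun h => hp (h ▸ (colReading lam i).2)
    rw [Equiv.swap_apply_of_ne_of_ne (hne j) (hne k), fillCells, fillCells,
      Function.extend_apply' _ _ _ fun ⟨i, hi⟩ => hne i hi.symm,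
      Function.extend_apply' _ _ _ fun ⟨i, hi⟩ => hne i hi.symm]

variable (R) in
/-- The functional on the group algebra sending a permutation `σ` to the Specht polynomial of `lam`
evaluated at `σ 0, …, σ (d - 1)`. -/
def spechtFunctional (lam : DiagramOfCard d) : MonoidAlgebra R (Equiv.Perm (Fin d)) →ₗ[R] R :=
  (MonoidAlgebra.basis _ R).constr R fun σ => specht lam.1 (fillCells lam fun k => ((σ k : ℕ) : R))

lemma spechtFunctional_of (lam : DiagramOfCard d) (σ : Equiv.Perm (Fin d)) :
    spechtFunctional R lam (of R _ σ) =
      specht lam.1 (fillCells lam fun k => ((σ k : ℕ) : R)) := by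
  rw [MonoidAlgebra.of_apply, ← MonoidAlgebra.basis_apply]
  exact Module.Basis.constr_basis ..

lemma spechtFunctional_one_ne_zero [IsDomain R] [CharZero R] (lam : DiagramOfCard d) :
    spechtFunctional R lam 1 ≠ 0 := by
  rw [← map_one (of R _), spechtFunctional_of]
  refine specht_ne_zero fun p hp q hq hpq => ?_
  obtain ⟨j, hj⟩ := (colReading lam).surjective ⟨p, hp⟩
  obtain ⟨k, hk⟩ := (colReading lam).surjective ⟨q, hq⟩
  obtain rfl : (colReading lam j : ℕ × ℕ) = p := congrArg Subtype.val hj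
  obtain rfl : (colReading lam k : ℕ × ℕ) = q := congrArg Subtype.val hk
  rw [fillCells_colReading, fillCells_colReading, Nat.cast_inj, Fin.val_inj] at hpq
  rw [← Equiv.Perm.one_apply j, hpq, Equiv.Perm.one_apply]

lemma spechtFunctional_mul_jucysMurphy (lam : DiagramOfCard d)
    (a : MonoidAlgebra R (Equiv.Perm (Fin d))) (k : Fin d) :
    spechtFunctional R lam (a * jucysMurphy R k) =
      (content (colReading lam k) : R) * spechtFunctional R lam a := by
  induction a using MonoidAlgebra.induction_on with
  | of σ =>
    rw [jucysMurphy, Finset.mul_sum, map_sum, spechtFunctional_of,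
      ← sum_cellsBefore_specht _ (colReading lam k).2, ← sum_lt_comp_colReading]
    refine Finset.sum_congr rfl fun j _ => ?_
    rw [← map_mul, spechtFunctional_of, ← fillCells_comp_swap]
    rfl
  | add a b ha hb => rw [add_mul, map_add, ha, hb, map_add, mul_add]
  | smul r a ha => rw [smul_mul_assoc, map_smul, ha, map_smul, smul_eq_mul, smul_eq_mul,
      mul_left_comm]

variable (R) in
/-- Evaluation of polynomials at the contents of `lam`, listed in the order of `colReading`. -/
def contentEval (lam : DiagramOfCard d) : MvPolynomial (Fin d) R →ₐ[R] R :=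
  MvPolynomial.aeval fun k => (content (colReading lam k) : R)

lemma spechtFunctional_mul_jmEval (lam : DiagramOfCard d)
    (a : MonoidAlgebra R (Equiv.Perm (Fin d))) (p : MvPolynomial (Fin d) R) :
    spechtFunctional R lam (a * jmEval R p) = contentEval R lam p * spechtFunctional R lam a := by
  induction p using MvPolynomial.induction_on generalizing a with
  | C r =>
    rw [← MvPolynomial.algebraMap_eq, AlgHom.commutes, AlgHom.commutes, ← Algebra.commutes,
      ← Algebra.smul_def, map_smul, smul_eq_mul, Algebra.algebraMap_self_apply]
  | add p q hp hq => rw [map_add, mul_add, map_add, hp, hq, map_add, add_mul]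
  | mul_X p j hp =>
    rw [map_mul (jmEval R), ← mul_assoc, jmEval_X, spechtFunctional_mul_jucysMurphy, hp, map_mul,
      contentEval, MvPolynomial.aeval_X]
    ring

lemma map_univ_colReading {β : Type*} (lam : DiagramOfCard d) (f : ℕ × ℕ → β) :
    Finset.univ.val.map (fun k => f (colReading lam k)) = lam.1.cells.val.map f := by
  have hcells : (Finset.univ.val.map (colReading lam)).map (fun p : lam.1.cells => f p) =
      lam.1.cells.val.map f := by
    rw [Multiset.map_univ_val_equiv]
    exact Multiset.attach_map_val' lam.1.cells.val f
  rwa [Multiset.map_map] at hcells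

lemma eq_of_contentEval_eq [IsDomain R] [CharZero R] {lam mu : DiagramOfCard d}
    (h : ∀ p : MvPolynomial (Fin d) R, p.IsSymmetric → contentEval R lam p = contentEval R mu p) :
    lam = mu := by
  let charpoly (nu : DiagramOfCard d) : Polynomial R :=
    ∏ k, (Polynomial.X - Polynomial.C (content (colReading nu k) : R))
  have heval (nu : DiagramOfCard d) (t : R) :
      (charpoly nu).eval t = contentEval R nu (∏ k, (C t - X k)) := by
    simp [charpoly, contentEval, Polynomial.eval_prod]
  have hroots (nu : DiagramOfCard d) :
      (charpoly nu).roots = (nu.1.cells.val.map content).map Int.cast := by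
    rw [← map_univ_colReading, Multiset.map_map,
      ← Polynomial.roots_multiset_prod_X_sub_C (Multiset.map _ _), Multiset.map_map]
    rfl
  have hsymmetric (t : R) : (∏ k : Fin d, (C t - X k) : MvPolynomial (Fin d) R).IsSymmetric :=
    fun σ => by
      simpa [map_prod] using Equiv.prod_comp σ fun k => (C t - X k : MvPolynomial (Fin d) R)
  have hcharpoly : charpoly lam = charpoly mu := Polynomial.funext fun t => by
    rw [heval, heval, h _ (hsymmetric t)]
  refine Subtype.ext (eq_of_map_content_eq ?_)
  refine Multiset.map_injective (Int.cast_injective (α := R)) ?_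
  rw [← hroots, hcharpoly, hroots]

end SpechtFunctionals

section CenterOfSymmetricGroup

variable {d : ℕ}

lemma card_conjClasses_perm_le : Nat.card (ConjClasses (Equiv.Perm (Fin d))) ≤
    Fintype.card (DiagramOfCard d) := by
  have hcycleType : Function.Injective (Quotient.lift Equiv.Perm.partition
      fun σ τ h => Equiv.Perm.partition_eq_of_isConj.1 h :
        ConjClasses (Equiv.Perm (Fin d)) → Nat.Partition (Fintype.card (Fin d))) := by
    rintro ⟨σ⟩ ⟨τ⟩ h
    exact Quotient.sound (Equiv.Perm.partition_eq_of_isConj.2 h)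
  refine (Nat.card_le_card_of_injective _ hcycleType).trans_eq ?_
  rw [Fintype.card_of_bijective rowPartition_bijective, Nat.card_eq_fintype_card, Fintype.card_fin]

variable (K : Type*) [Field K] [CharZero K]

-- Evaluated on symmetric polynomials in the Jucys–Murphy elements, these functionals are nonzero
-- multiples of pairwise distinct characters.
lemma linearIndependent_spechtFunctional_center :
    LinearIndependent K fun lam : DiagramOfCard d => spechtFunctional K lam ∘ₗ
      (Subalgebra.center K (MonoidAlgebra K (Equiv.Perm (Fin d)))).val.toLinearMap := by
  let evalAtJM : Module.Dual K (Subalgebra.center K (MonoidAlgebra K (Equiv.Perm (Fin d)))) →ₗ[K]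
      MvPolynomial.symmetricSubalgebra (Fin d) K → K :=
    LinearMap.pi fun p => Module.Dual.eval K _ ⟨jmEval K p.1, jmEval_mem_center p.2⟩
  let character (lam : DiagramOfCard d) : MvPolynomial.symmetricSubalgebra (Fin d) K →* K :=
    ((contentEval K lam).comp (MvPolynomial.symmetricSubalgebra (Fin d) K).val : _ →ₐ[K] K)
  have hcharacter : Function.Injective character := fun lam mu h =>
    eq_of_contentEval_eq fun p hp => DFunLike.congr_fun h ⟨p, hp⟩
  have hfactor : evalAtJM ∘ (fun lam : DiagramOfCard d => spechtFunctional K lam ∘ₗ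
      (Subalgebra.center K (MonoidAlgebra K (Equiv.Perm (Fin d)))).val.toLinearMap) =
      fun lam => spechtFunctional K lam 1 • ⇑(character lam) := by
    ext lam p
    have heigen := spechtFunctional_mul_jmEval lam (1 : MonoidAlgebra K _) p.1
    rw [one_mul, mul_comm] at heigen
    exact heigen
  refine LinearIndependent.of_comp evalAtJM ?_
  rw [hfactor]
  exact ((linearIndependent_monoidHom _ K).comp character hcharacter).units_smul
    fun lam => Units.mk0 _ (spechtFunctional_one_ne_zero lam)

variable {K}

lemma trace_center_jmEval {p : MvPolynomial (Fin d) K} (hp : p.IsSymmetric) :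
    Algebra.trace K (Subalgebra.center K (MonoidAlgebra K (Equiv.Perm (Fin d))))
      ⟨jmEval K p, jmEval_mem_center hp⟩ = ∑ lam : DiagramOfCard d, contentEval K lam p := by
  rw [Algebra.trace_apply]
  refine trace_eq_sum_of_dual_eigenvectors (linearIndependent_spechtFunctional_center K)
    (finrank_center_le_card_conjClasses.trans card_conjClasses_perm_le) fun lam => ?_
  ext x
  have heigen := spechtFunctional_mul_jmEval lam x.1 p
  rwa [Subalgebra.mem_center_iff.1 (jmEval_mem_center hp)] at heigen

open scoped commutatorElement in
lemma sum_coeff_jmEval_commutatorElement {p : MvPolynomial (Fin d) K} (hp : p.IsSymmetric) :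
    ∑ x : Equiv.Perm (Fin d), ∑ y, (jmEval K p).coeff ⁅x, y⁆ =
      (d.factorial : K) * ∑ lam : DiagramOfCard d, contentEval K lam p := by
  rw [sum_coeff_commutatorElement (jmEval_mem_center hp), trace_center_jmEval hp, Fintype.card_perm,
    Fintype.card_fin]

end CenterOfSymmetricGroup

section MonotoneFactorizations

open MonoidAlgebra (of)
open MvPolynomial (X)

open scoped Classical in
lemma sum_monotone_eq_sum_sym {ι A : Type*} [Fintype ι] [LinearOrder ι] [CommSemiring A] (r : ℕ)
    (y : ι → A) :
    ∑ f : Fin r → ι with Monotone f, ∏ i, y (f i) = ∑ s : Sym ι r, (s.1.map y).prod := by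
  refine Finset.sum_bij (fun f _ => ⟨(List.ofFn f : Multiset ι), by simp⟩)
    (fun _ _ => Finset.mem_univ _) (fun f hf g hg h => ?_) (fun s _ => ?_) (fun f _ => ?_)
  · have hperm : (List.ofFn f).Perm (List.ofFn g) :=
      Multiset.coe_eq_coe.1 (congrArg Subtype.val h)
    exact List.ofFn_injective (hperm.eq_of_sortedLE
      (List.sortedLE_ofFn_iff.2 (Finset.mem_filter.1 hf).2)
      (List.sortedLE_ofFn_iff.2 (Finset.mem_filter.1 hg).2))
  · obtain ⟨s, hs⟩ := s
    obtain rfl : (s.sort (· ≤ ·)).length = r := (Multiset.length_sort _).trans hs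
    refine ⟨(s.sort (· ≤ ·)).get, Finset.mem_filter.2 ⟨Finset.mem_univ _, ?_⟩, Subtype.ext ?_⟩
    · rw [← List.sortedLE_ofFn_iff, List.ofFn_get]
      exact (s.pairwise_sort (· ≤ ·)).sortedLE
    · simp only [List.ofFn_get, Multiset.sort_eq]
  · simp [List.prod_ofFn]

lemma swap_inj_of_lt {ι : Type*} [LinearOrder ι] {a b a' b' : ι} (h : a < b) (h' : a' < b')
    (heq : Equiv.swap a b = Equiv.swap a' b') : a = a' ∧ b = b' := by
  have hb : Equiv.swap a' b' a = b := by rw [← heq, Equiv.swap_apply_left]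
  rw [Equiv.swap_apply_def] at hb
  split_ifs at hb with ha ha'
  · exact ⟨ha, hb.symm⟩
  · exact absurd h (hb ▸ ha' ▸ h'.not_gt)
  · exact absurd hb h.ne

variable {ι : Type*} [LinearOrder ι] {r : ℕ}

/-- A monotone tuple of transpositions: writing `τ i = (s i, t i)` with `s i < t i`, the sequence
`t` is weakly increasing. -/
def IsMonotoneSwapTuple (τ : Fin r → Equiv.Perm ι) : Prop :=
  (∀ i, (τ i).IsSwap) ∧ ∀ i j, i ≤ j → ∀ a b a' b', a < b → a' < b' →
    τ i = Equiv.swap a b → τ j = Equiv.swap a' b' → b ≤ b'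

lemma isMonotoneSwapTuple_swap {s t : Fin r → ι} (hst : ∀ i, s i < t i) (ht : Monotone t) :
    IsMonotoneSwapTuple fun i => Equiv.swap (s i) (t i) := by
  refine ⟨fun i => ⟨_, _, (hst i).ne, rfl⟩, fun i j hij a b a' b' hab hab' hi hj => ?_⟩
  rw [← (swap_inj_of_lt (hst i) hab hi).2, ← (swap_inj_of_lt (hst j) hab' hj).2]
  exact ht hij

lemma IsMonotoneSwapTuple.exists_eq_swap {τ : Fin r → Equiv.Perm ι} (hτ : IsMonotoneSwapTuple τ) :
    ∃ s t : Fin r → ι, (∀ i, s i < t i) ∧ Monotone t ∧ τ = fun i => Equiv.swap (s i) (t i) := by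
  have hswap (i : Fin r) : ∃ a b, a < b ∧ τ i = Equiv.swap a b := by
    obtain ⟨a, b, hab, hτi⟩ := hτ.1 i
    obtain hlt | hgt := hab.lt_or_gt
    · exact ⟨a, b, hlt, hτi⟩
    · exact ⟨b, a, hgt, hτi.trans (Equiv.swap_comm a b)⟩
  choose s t hst hτst using hswap
  exact ⟨s, t, hst, fun i j hij => hτ.2 i j hij _ _ _ _ (hst i) (hst j) (hτst i) (hτst j),
    funext hτst⟩

variable [Fintype ι] {R : Type*} [CommRing R]

open scoped Classical in
lemma hsymm_eq_sum_monotone :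
    MvPolynomial.hsymm ι R r = ∑ t : Fin r → ι with Monotone t, ∏ i, X (t i) :=
  (sum_monotone_eq_sum_sym r X).symm

lemma jmEval_prod_X (t : Fin r → ι) :
    jmEval R (∏ i, X (t i)) = ∑ s ∈ Fintype.piFinset fun i => Finset.univ.filter fun j => j < t i,
      of R _ (List.ofFn fun i => Equiv.swap (s i) (t i)).prod := by
  have hexpand := MultilinearMap.map_sum_finset
    (MultilinearMap.mkPiAlgebraFin R r (MonoidAlgebra R (Equiv.Perm ι)))
    (fun i j => of R _ (Equiv.swap j (t i))) fun i => Finset.univ.filter fun j => j < t i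
  simp only [MultilinearMap.mkPiAlgebraFin_apply] at hexpand
  simp only [← List.prod_ofFn, map_list_prod, List.map_ofFn, Function.comp_def, jmEval_X]
  exact hexpand

open scoped Classical in
lemma jmEval_hsymm :
    jmEval R (MvPolynomial.hsymm ι R r) =
      ∑ τ : Fin r → Equiv.Perm ι with IsMonotoneSwapTuple τ, of R _ (List.ofFn τ).prod := by
  rw [hsymm_eq_sum_monotone, map_sum, Finset.sum_congr rfl fun t _ => jmEval_prod_X t,
    Finset.sum_sigma']
  refine Finset.sum_bij (fun st _ i => Equiv.swap (st.2 i) (st.1 i)) (fun ⟨t, s⟩ hst => ?_)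
    (fun ⟨t, s⟩ hst ⟨t', s'⟩ hst' h => ?_) (fun τ hτ => ?_) fun _ _ => rfl
  · simp only [Finset.mem_filter, Finset.mem_sigma, Finset.mem_univ, true_and,
      Fintype.mem_piFinset] at hst ⊢
    exact isMonotoneSwapTuple_swap hst.2 hst.1
  · simp only [Finset.mem_filter, Finset.mem_sigma, Finset.mem_univ, true_and,
      Fintype.mem_piFinset] at hst hst'
    have hinj (i : Fin r) := swap_inj_of_lt (hst.2 i) (hst'.2 i) (congrFun h i)
    obtain rfl : t = t' := funext fun i => (hinj i).2
    obtain rfl : s = s' := funext fun i => (hinj i).1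
    rfl
  · obtain ⟨s, t, hst, ht, rfl⟩ := (Finset.mem_filter.1 hτ).2.exists_eq_swap
    exact ⟨⟨t, s⟩, by simpa using ⟨ht, hst⟩, rfl⟩

lemma coeff_jmEval_hsymm (π : Equiv.Perm ι) :
    (jmEval R (MvPolynomial.hsymm ι R r)).coeff π =
      Nat.card {τ : Fin r → Equiv.Perm ι // (List.ofFn τ).prod = π ∧ IsMonotoneSwapTuple τ} := by
  classical
  rw [jmEval_hsymm, MonoidAlgebra.coeff_sum, Finset.sum_apply', Nat.card_eq_fintype_card,
    Fintype.card_subtype, Finset.sum_filter, ← Finset.sum_boole]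
  refine Finset.sum_congr rfl fun τ _ => ?_
  rw [MonoidAlgebra.of_apply, MonoidAlgebra.coeff_single, Finsupp.single_apply, ← ite_and]
  exact if_congr and_comm rfl rfl

end MonotoneFactorizations

section ContentSums

lemma hsym_eq_eval_hsymm {d r : ℕ} (x : Fin d → ℝ) :
    hsym d r x = MvPolynomial.eval x (MvPolynomial.hsymm (Fin d) ℝ r) := by
  simp [hsymm_eq_sum_monotone, hsym]

lemma hYoung_eq_contentEval_hsymm {d r : ℕ} (lam : DiagramOfCard d) :
    hYoung r lam.1 = contentEval ℝ lam (MvPolynomial.hsymm (Fin d) ℝ r) := by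
  obtain ⟨lam, rfl⟩ := lam
  let σ : Equiv.Perm (Fin lam.card) := (colReading ⟨lam, rfl⟩).trans lam.cells.equivFin
  have hσ : (fun i => (content (lam.cells.equivFin.symm i) : ℝ)) ∘ σ =
      fun k => (content (colReading ⟨lam, rfl⟩ k) : ℝ) :=
    funext fun k => by simp [σ]
  rw [hYoung, hsym_eq_eval_hsymm, ← MvPolynomial.hsymm_isSymmetric (Fin lam.card) ℝ r σ,
    MvPolynomial.eval_rename, MvPolynomial.hsymm_isSymmetric, hσ, contentEval,
    MvPolynomial.aeval_eq_eval]

end ContentSums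

section Counting

lemma natCard_subtype_prod {α β : Type*} [Fintype α] [Finite β] (p : α → β → Prop) :
    Nat.card {c : α × β // p c.1 c.2} = ∑ a, Nat.card {b // p a b} := by
  rw [Nat.card_congr (Equiv.subtypeProdEquivSigmaSubtype p), Nat.card_sigma]

open scoped commutatorElement in
lemma natCard_commutator_mul_eq_one {G T : Type*} [Group G] [Fintype G] [Finite T] (f : T → G)
    (Q : T → Prop) :
    Nat.card {c : G × G × T // c.1 * c.2.1 * c.1⁻¹ * c.2.1⁻¹ * f c.2.2 = 1 ∧ Q c.2.2} =
      ∑ x : G, ∑ y : G, Nat.card {t // f t = ⁅x, y⁆ ∧ Q t} := by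
  have hcomm (x y : G) (t : T) : x * y * x⁻¹ * y⁻¹ * f t = 1 ↔ f t = ⁅y, x⁆ := by
    rw [← commutatorElement_def, mul_eq_one_iff_inv_eq, commutatorElement_inv, eq_comm]
  rw [natCard_subtype_prod fun (x : G) (c : G × T) =>
    x * c.1 * x⁻¹ * c.1⁻¹ * f c.2 = 1 ∧ Q c.2, Finset.sum_comm]
  refine Finset.sum_congr rfl fun x _ => ?_
  rw [natCard_subtype_prod fun (y : G) t => x * y * x⁻¹ * y⁻¹ * f t = 1 ∧ Q t]
  simp only [hcomm]

end Counting

theorem Hgd_eq_card_monotone_factorizations_general (r d : ℕ) :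
    (d.factorial : ℝ) * ∑' lam : {lam : YoungDiagram // lam.card = d}, hYoung r lam.1 = (Nat.card
      {c : Equiv.Perm (Fin d) × Equiv.Perm (Fin d) × (Fin r → Equiv.Perm (Fin d)) //
        c.1 * c.2.1 * c.1⁻¹ * c.2.1⁻¹ * (List.ofFn c.2.2).prod = 1 ∧
        (∀ i, (c.2.2 i).IsSwap) ∧
        (∀ i j : Fin r, i ≤ j → ∀ a b a' b' : Fin d, a < b → a' < b' →
          c.2.2 i = Equiv.swap a b → c.2.2 j = Equiv.swap a' b' → b ≤ b')} : ℝ) := by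
  have htrace := sum_coeff_jmEval_commutatorElement (K := ℝ)
    (MvPolynomial.hsymm_isSymmetric (Fin d) ℝ r)
  have hcount := natCard_commutator_mul_eq_one (fun τ : Fin r → Equiv.Perm (Fin d) =>
    (List.ofFn τ).prod) IsMonotoneSwapTuple
  simp only [coeff_jmEval_hsymm] at htrace
  rw [tsum_fintype, Finset.sum_congr rfl fun lam _ => hYoung_eq_contentEval_hsymm lam, ← htrace]
  exact_mod_cast hcount.symm

/-- `H_g^d = d! · Σ_{λ ∈ Y^d} h_{2g−2}(λ)` equals the number of tuples
`(π₁, π₂, τ₁, …, τ_{2g−2})` of permutations of `{1,…,d}` such that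
(1) `π₁π₂π₁⁻¹π₂⁻¹τ₁⋯τ_{2g−2}` is the identity, (2) each `τ_i` is a transposition, and
(3) writing `τ_i = (s_i t_i)` with `s_i < t_i`, one has `t₁ ≤ … ≤ t_{2g−2}`. -/
theorem Hgd_eq_card_monotone_factorizations (g d : ℕ) (hg : 1 ≤ g) (hd : 1 ≤ d) :
    Hgd g d = (Nat.card
      {c : Equiv.Perm (Fin d) × Equiv.Perm (Fin d) × (Fin (2 * g - 2) → Equiv.Perm (Fin d)) //
        c.1 * c.2.1 * c.1⁻¹ * c.2.1⁻¹ * (List.ofFn c.2.2).prod = 1 ∧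
        (∀ i, (c.2.2 i).IsSwap) ∧
        (∀ i j : Fin (2 * g - 2), i ≤ j → ∀ a b a' b' : Fin d, a < b → a' < b' →
          c.2.2 i = Equiv.swap a b → c.2.2 j = Equiv.swap a' b' → b ≤ b')} : ℝ) :=
  Hgd_eq_card_monotone_factorizations_general (2 * g - 2) d
end
end
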